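/- Let n ≥ 4 and let 0 < γ < γ*(n). Then there exist constants c ∈ (0, 1/2), ε₀ ∈ (0, 1) and C > 0, depending only on n and γ, with the following property. For every ε ∈ (0, ε₀), set V = {x ∈ ℝⁿ : ‖x‖ ≤ c, ‖x − (1+ε)eₙ‖ ≥ 1, ‖x + (1+ε)eₙ‖ ≥ 1}. Suppose u : ℝⁿ → ℝ is C² on an open set containing V, Δu = 0 at every point of the interior of V, and u satisfies the Neumann conditions ⟨∇u(x), x − (1+ε)eₙ⟩ = 0 for every x ∈ V with ‖x − (1+ε)eₙ‖ = 1 and ⟨∇u(x), x + (1+ε)eₙ⟩ = 0 for every x ∈ V with ‖x + (1+ε)eₙ‖ = 1. Then for every x ∈ V, (ε + |x'|²)^{1−γ} ‖∇u(x)‖² ≤ C · sup{ ‖∇u(y)‖² : y ∈ V, ‖y‖ = c }. (This is the maximum-principle form of the main gradient estimate |∇u|(x) ≤ C‖φ‖_{C^{1,α}(∂Ω)} (ε+|x'|²)^{−(1−γ)/2} of Theorem 1.1.) -/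

import Mathlib

open scoped RealInnerProductSpace

/-- `γ*(n)`: the unique positive root of `(n−2)t² + (n²−4n+5)t − (n²−5n+5) = 0` for `n ≥ 4`. -/
noncomputable def gammaStar (n : ℕ) : ℝ :=
  (-((n : ℝ) ^ 2 - 4 * n + 5) +
      Real.sqrt (((n : ℝ) ^ 2 - 4 * n + 5) ^ 2 + 4 * ((n : ℝ) - 2) * ((n : ℝ) ^ 2 - 5 * n + 5))) /
    (2 * ((n : ℝ) - 2))

/-!
For a suitable quadratic weight `f = δ + |x'|² - A xₙ²`, comparable to `ε + |x'|²` in the neck, the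
function `f ^ (1 - γ) * ‖∇ u‖ ^ 2` attains its maximum over `V` on the sphere `‖x‖ = c`.

At an interior maximum, Bochner's formula together with the refined Kato inequality for the
trace-free Hessian of `u` gives an inequality between `f Δ f` and `‖∇ f‖ ^ 2`. At a maximum on one
of the unit spheres, differentiating the Neumann condition along the sphere shows that
`‖∇ u‖ ^ 2` has radial derivative `-2 ‖∇ u‖ ^ 2`, which bounds the radial derivative of `f`.
The weight violates both inequalities, unless `∇ u = 0`, once `A` lies in an interval which is
nonempty exactly when `γ < γ*(n)`.

Bochner's formula involves third derivatives of `u`, while `u` is only `C²`. Its consequence at a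
maximum is obtained by applying it to the difference quotients of `u`, which are harmonic and `C²`,
and passing to the limit by a perturbation argument.
-/

open Filter Topology Set Metric Module Asymptotics InnerProductSpace
open scoped Gradient Laplacian

section DifferenceQuotient

variable {E F : Type*} [NormedAddCommGroup E] [NormedSpace ℝ E] [NormedAddCommGroup F]
  [NormedSpace ℝ F]

/-- The difference quotient `(f (x + t v) - f x) / t`, which stands in for the derivative of `f`
along `v` where that derivative is not regular enough to be differentiated twice. -/
noncomputable def diffQuot (f : E → F) (v : E) (t : ℝ) (x : E) : F :=
  t⁻¹ • (f (x + t • v) - f x)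

lemma tendsto_diffQuot {f : E → F} {f' : E →L[ℝ] F} {x : E} (hf : HasStrictFDerivAt f f' x)
    (v : E) :
    Tendsto (fun p : ℝ × E => diffQuot f v p.1 p.2) (𝓝[≠] 0 ×ˢ 𝓝 x) (𝓝 (f' v)) := by
  have ht : Tendsto (fun p : ℝ × E => p.1) (𝓝[≠] 0 ×ˢ 𝓝 x) (𝓝 0) :=
    tendsto_fst.mono_right nhdsWithin_le_nhds
  have hshift : Tendsto (fun p : ℝ × E => p.2 + p.1 • v) (𝓝[≠] 0 ×ˢ 𝓝 x) (𝓝 x) := by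
    simpa using tendsto_snd.add (ht.smul_const v)
  have ho := hf.isLittleO.comp_tendsto (hshift.prodMk_nhds tendsto_snd)
  have hO : (fun p : ℝ × E => f (p.2 + p.1 • v) - f p.2 - p.1 • f' v)
      =o[𝓝[≠] 0 ×ˢ 𝓝 x] fun p => p.1 := by
    refine IsLittleO.trans_isBigO (g := fun p : ℝ × E => p.1 • v) ?_ ?_
    · simpa [Function.comp_def] using ho
    · exact .of_bound ‖v‖ (.of_forall fun p => by rw [norm_smul, mul_comm])
  rw [tendsto_iff_norm_sub_tendsto_zero]
  refine hO.norm_norm.tendsto_div_nhds_zero.congr' ?_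
  filter_upwards [tendsto_fst.eventually self_mem_nhdsWithin] with p (hp : p.1 ≠ 0)
  rw [diffQuot, div_eq_inv_mul, ← norm_inv, ← norm_smul, smul_sub, inv_smul_smul₀ hp]

end DifferenceQuotient

section Laplacian

variable {E : Type*} [NormedAddCommGroup E] [InnerProductSpace ℝ E]

section Complete

variable [CompleteSpace E] {f g : E → ℝ} {f' g' x : E}

lemma contDiffAt_gradient {n : WithTop ℕ∞} (hf : ContDiffAt ℝ (n + 1) f x) :
    ContDiffAt ℝ n (∇ f) x :=
  (toDual ℝ E).symm.contDiff.contDiffAt.comp x (hf.fderiv_right le_rfl)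

lemma differentiableAt_gradient (hf : ContDiffAt ℝ 2 f x) : DifferentiableAt ℝ (∇ f) x :=
  (contDiffAt_gradient (n := 1) hf).differentiableAt one_ne_zero

lemma eventually_hasGradientAt (hf : ContDiffAt ℝ 1 f x) :
    ∀ᶠ y in 𝓝 x, HasGradientAt f (∇ f y) y :=
  (hf.eventually (by simp)).mono fun _ hy => (hy.differentiableAt one_ne_zero).hasGradientAt

lemma inner_fderiv_gradient (f : E → ℝ) (x a b : E) :
    ⟪fderiv ℝ (∇ f) x a, b⟫ = fderiv ℝ (fderiv ℝ f) x a b := by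
  rw [← toDual_comp_gradient, LinearIsometryEquiv.comp_fderiv]
  exact toDual_apply_apply.symm

lemma isSymmetric_fderiv_gradient (hf : ContDiffAt ℝ 2 f x) :
    (fderiv ℝ (∇ f) x : E →ₗ[ℝ] E).IsSymmetric := fun a b => by
  simp only [ContinuousLinearMap.coe_coe]
  rw [inner_fderiv_gradient, real_inner_comm, inner_fderiv_gradient]
  exact (hf.isSymmSndFDerivAt (by simp)).eq a b

lemma hasGradientAt_mul (hf : HasGradientAt f f' x) (hg : HasGradientAt g g' x) :
    HasGradientAt (fun y => f y * g y) (f x • g' + g x • f') x := by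
  rw [hasGradientAt_iff_hasFDerivAt] at hf hg ⊢
  simpa using hf.fun_mul hg

lemma hasGradientAt_comp {φ : ℝ → ℝ} {φ' : ℝ} (hφ : HasDerivAt φ φ' (f x))
    (hf : HasGradientAt f f' x) : HasGradientAt (fun y => φ (f y)) (φ' • f') x := by
  rw [hasGradientAt_iff_hasFDerivAt] at hf ⊢
  exact (hφ.comp_hasFDerivAt x hf).congr_fderiv (map_smul (toDual ℝ E) φ' f').symm

lemma hasGradientAt_norm_sub_sq (a x : E) :
    HasGradientAt (fun y => ‖y - a‖ ^ 2) ((2 : ℝ) • (x - a)) x := by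
  rw [hasGradientAt_iff_hasFDerivAt]
  exact ((hasFDerivAt_id x).sub_const a).norm_sq.congr_fderiv (by ext v; simp)

lemma hasGradientAt_inner_sq (e x : E) :
    HasGradientAt (fun y => ⟪e, y⟫ ^ 2) ((2 * ⟪e, x⟫) • e) x := by
  rw [hasGradientAt_iff_hasFDerivAt]
  exact ((innerSL ℝ e).hasFDerivAt.pow 2).congr_fderiv (by ext v; simp)

lemma hasGradientAt_norm_gradient_sq (hf : ContDiffAt ℝ 2 f x) :
    HasGradientAt (fun y => ‖∇ f y‖ ^ 2) ((2 : ℝ) • fderiv ℝ (∇ f) x (∇ f x)) x := by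
  rw [hasGradientAt_iff_hasFDerivAt]
  refine (differentiableAt_gradient hf).hasFDerivAt.norm_sq.congr_fderiv ?_
  ext v
  have hsym : ⟪∇ f x, fderiv ℝ (∇ f) x v⟫ = ⟪fderiv ℝ (∇ f) x (∇ f x), v⟫ :=
    (isSymmetric_fderiv_gradient hf _ _).symm
  simp [hsym]

lemma gradient_diffQuot {v : E} {t : ℝ} (hx : DifferentiableAt ℝ f x)
    (hxv : DifferentiableAt ℝ f (x + t • v)) :
    ∇ (diffQuot f v t) x = diffQuot (∇ f) v t x := by
  have hshift : DifferentiableAt ℝ (fun y => f (y + t • v)) x :=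
    hxv.comp x (differentiableAt_id.add_const _)
  have : fderiv ℝ (diffQuot f v t) x = t⁻¹ • (fderiv ℝ f (x + t • v) - fderiv ℝ f x) := by
    unfold diffQuot
    rw [fderiv_fun_const_smul (hshift.fun_sub hx), fderiv_fun_sub hshift hx,
      fderiv_comp_add_right]
  simp [gradient, this, diffQuot]

end Complete

variable [FiniteDimensional ℝ E] {f g : E → ℝ} {x : E}

lemma laplacian_eq_trace_fderiv_gradient (f : E → ℝ) (x : E) :
    Δ f x = LinearMap.trace ℝ E (fderiv ℝ (∇ f) x) := by
  rw [laplacian_eq_iteratedFDeriv_stdOrthonormalBasis,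
    LinearMap.trace_eq_sum_inner _ (stdOrthonormalBasis ℝ E)]
  simp only [ContinuousLinearMap.coe_coe, real_inner_comm (fderiv ℝ (∇ f) x _),
    inner_fderiv_gradient, iteratedFDeriv_two_apply]
  rfl

lemma laplacian_eq_trace_of_hasFDerivAt {G : E → E} {L : E →L[ℝ] E}
    (hG : ∀ᶠ y in 𝓝 x, HasGradientAt f (G y) y) (hL : HasFDerivAt G L x) :
    Δ f x = LinearMap.trace ℝ E L := by
  have : ∇ f =ᶠ[𝓝 x] G := hG.mono fun y hy => hy.gradient
  rw [laplacian_eq_trace_fderiv_gradient, this.fderiv_eq, hL.fderiv]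

lemma trace_smulRight (ℓ : E →L[ℝ] ℝ) (b : E) :
    LinearMap.trace ℝ E (ℓ.smulRight b : E →L[ℝ] E) = ℓ b :=
  LinearMap.trace_smulRight (ℓ : E →ₗ[ℝ] ℝ) b

lemma laplacian_mul (hf : ContDiffAt ℝ 2 f x) (hg : ContDiffAt ℝ 2 g x) :
    Δ (fun y => f y * g y) x = f x * Δ g x + 2 * ⟪∇ f x, ∇ g x⟫ + g x * Δ f x := by
  have hgrad : ∀ᶠ y in 𝓝 x, HasGradientAt (fun y => f y * g y) (f y • ∇ g y + g y • ∇ f y) y := by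
    filter_upwards [eventually_hasGradientAt (hf.of_le one_le_two),
      eventually_hasGradientAt (hg.of_le one_le_two)] with y hfy hgy using hasGradientAt_mul hfy hgy
  have hfd := (hf.differentiableAt two_ne_zero).hasGradientAt.hasFDerivAt
  have hgd := (hg.differentiableAt two_ne_zero).hasGradientAt.hasFDerivAt
  rw [laplacian_eq_trace_of_hasFDerivAt hgrad
    ((hfd.fun_smul (differentiableAt_gradient hg).hasFDerivAt).fun_add
      (hgd.fun_smul (differentiableAt_gradient hf).hasFDerivAt))]
  simp only [ContinuousLinearMap.toLinearMap_add, ContinuousLinearMap.toLinearMap_smul, map_add,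
    map_smul, smul_eq_mul, trace_smulRight, toDual_apply_apply, real_inner_comm,
    laplacian_eq_trace_fderiv_gradient]
  ring

lemma laplacian_comp {φ φ' : ℝ → ℝ} {φ'' : ℝ} (hφ : ∀ᶠ s in 𝓝 (f x), HasDerivAt φ (φ' s) s)
    (hφ' : HasDerivAt φ' φ'' (f x)) (hf : ContDiffAt ℝ 2 f x) :
    Δ (fun y => φ (f y)) x = φ' (f x) * Δ f x + φ'' * ‖∇ f x‖ ^ 2 := by
  have hgrad : ∀ᶠ y in 𝓝 x, HasGradientAt (fun y => φ (f y)) (φ' (f y) • ∇ f y) y := by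
    filter_upwards [hf.continuousAt.eventually hφ,
      eventually_hasGradientAt (hf.of_le one_le_two)] with y hφy hfy
      using hasGradientAt_comp hφy hfy
  have hfd := (hf.differentiableAt two_ne_zero).hasGradientAt.hasFDerivAt
  rw [laplacian_eq_trace_of_hasFDerivAt hgrad
    ((hφ'.comp_hasFDerivAt x hfd).fun_smul (differentiableAt_gradient hf).hasFDerivAt)]
  simp only [ContinuousLinearMap.toLinearMap_add, ContinuousLinearMap.toLinearMap_smul, map_add,
    map_smul, smul_eq_mul, trace_smulRight, smul_apply, toDual_apply_apply,
    real_inner_self_eq_norm_sq, laplacian_eq_trace_fderiv_gradient, Function.comp_apply]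

lemma laplacian_norm_sub_sq (a x : E) : Δ (fun y => ‖y - a‖ ^ 2) x = 2 * finrank ℝ E := by
  rw [laplacian_eq_trace_of_hasFDerivAt (.of_forall (hasGradientAt_norm_sub_sq a))
    (((hasFDerivAt_id x).sub_const a).const_smul (2 : ℝ))]
  simp

lemma harmonicAt_comp_add_right {a : E} (hf : HarmonicAt f (x + a)) :
    HarmonicAt (fun y => f (y + a)) x := by
  have hadd : ContDiffAt ℝ 2 (fun y => y + a) x := contDiffAt_id.add contDiffAt_const
  refine ⟨ContDiffAt.comp (g := f) x hf.1 hadd, ?_⟩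
  filter_upwards [hadd.continuousAt.eventually hf.2] with y hy
  simpa [laplacian_eq_iteratedFDeriv_stdOrthonormalBasis, iteratedFDeriv_comp_add_right] using hy

lemma harmonicAt_diffQuot {v : E} {t : ℝ} (hx : HarmonicAt f x) (hxv : HarmonicAt f (x + t • v)) :
    HarmonicAt (diffQuot f v t) x :=
  ((harmonicAt_comp_add_right hxv).sub hx).const_smul

end Laplacian

section LocalMax

lemma deriv_deriv_nonpos_of_isLocalMax {φ : ℝ → ℝ} {a : ℝ} (hφ : ContinuousAt φ a)
    (hmax : IsLocalMax φ a) : deriv (deriv φ) a ≤ 0 := by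
  by_contra! hpos
  have hmin := isLocalMin_of_deriv_deriv_pos hpos hmax.deriv_eq_zero hφ
  have hconst : φ =ᶠ[𝓝 a] fun _ => φ a := by
    filter_upwards [hmax, hmin] with s hs hs' using le_antisymm hs hs'
  simp [hconst.deriv.deriv_eq] at hpos

variable {E : Type*} [NormedAddCommGroup E] [InnerProductSpace ℝ E]

lemma inner_fderiv_gradient_self_nonpos_of_isLocalMax [CompleteSpace E] {F : E → ℝ} {x : E}
    (hF : ContDiffAt ℝ 2 F x) (hmax : IsLocalMax F x) (v : E) :
    ⟪fderiv ℝ (∇ F) x v, v⟫ ≤ 0 := by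
  have hline (s : ℝ) : HasDerivAt (fun s : ℝ => x + s • v) v s := by
    simpa using ((hasDerivAt_id s).smul_const v).const_add x
  have htend : Tendsto (fun s : ℝ => x + s • v) (𝓝 0) (𝓝 x) := by
    simpa using (hline 0).continuousAt.tendsto
  have hderiv : ∀ᶠ s in 𝓝 (0 : ℝ),
      HasDerivAt (fun s => F (x + s • v)) ⟪∇ F (x + s • v), v⟫ s := by
    filter_upwards [htend.eventually (eventually_hasGradientAt (hF.of_le one_le_two))] with s hs
    simpa [Function.comp_def] using hs.hasFDerivAt.comp_hasDerivAt s (hline s)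
  have hderiv₂ : HasDerivAt (fun s => ⟪∇ F (x + s • v), v⟫) ⟪fderiv ℝ (∇ F) x v, v⟫ (0 : ℝ) := by
    have hgrad : HasFDerivAt (∇ F) (fderiv ℝ (∇ F) x) (x + (0 : ℝ) • v) := by
      simpa using (differentiableAt_gradient hF).hasFDerivAt
    simpa using (hgrad.comp_hasDerivAt 0 (hline 0)).inner ℝ (hasDerivAt_const 0 v)
  have heq : deriv (fun s : ℝ => F (x + s • v)) =ᶠ[𝓝 0] fun s => ⟪∇ F (x + s • v), v⟫ :=
    hderiv.mono fun s hs => hs.deriv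
  rw [← hderiv₂.deriv, ← heq.deriv_eq]
  refine deriv_deriv_nonpos_of_isLocalMax hderiv.self_of_nhds.continuousAt ?_
  filter_upwards [htend.eventually hmax] with s hs
  simpa using hs

variable [FiniteDimensional ℝ E]

lemma laplacian_nonpos_of_isLocalMax {F : E → ℝ} {x : E} (hF : ContDiffAt ℝ 2 F x)
    (hmax : IsLocalMax F x) : Δ F x ≤ 0 := by
  rw [laplacian_eq_trace_fderiv_gradient, LinearMap.trace_eq_sum_inner _ (stdOrthonormalBasis ℝ E)]
  refine Finset.sum_nonpos fun i _ => ?_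
  rw [real_inner_comm]
  exact inner_fderiv_gradient_self_nonpos_of_isLocalMax hF hmax _

lemma exists_mem_ball_laplacian_le {F : E → ℝ} {x₀ : E} {ρ δ : ℝ} (hρ : 0 < ρ)
    (hF : ∀ x ∈ closedBall x₀ ρ, ContDiffAt ℝ 2 F x)
    (hsphere : ∀ x ∈ sphere x₀ ρ, F x < F x₀ + δ * ρ ^ 2) :
    ∃ y ∈ ball x₀ ρ, Δ F y ≤ 2 * δ * finrank ℝ E := by
  have hsq (x : E) : ContDiffAt ℝ 2 (fun x => ‖x - x₀‖ ^ 2) x :=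
    (contDiffAt_id.sub contDiffAt_const).norm_sq ℝ
  have hcont : ContinuousOn (fun x => F x - δ * ‖x - x₀‖ ^ 2) (closedBall x₀ ρ) := fun x hx =>
    ((hF x hx).continuousAt.sub ((hsq x).continuousAt.const_mul δ)).continuousWithinAt
  obtain ⟨y, hy, hmax⟩ := (isCompact_closedBall x₀ ρ).exists_isLocalMax_mem_open
    ball_subset_closedBall hcont (mem_closedBall_self hρ.le) (fun x hx => by
      rw [closedBall_sdiff_ball] at hx
      simpa [mem_sphere_iff_norm.1 hx, sub_lt_iff_lt_add] using hsphere x hx) isOpen_ball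
  have hyF := hF y (ball_subset_closedBall hy)
  have hlap : Δ (fun x => F x - δ * ‖x - x₀‖ ^ 2) y = Δ F y - δ * (2 * finrank ℝ E) := by
    rw [← laplacian_norm_sub_sq x₀ y, ← smul_eq_mul, ← laplacian_smul δ (hsq y)]
    exact hyF.laplacian_sub ((hsq y).const_smul δ)
  have hle := laplacian_nonpos_of_isLocalMax (hyF.sub ((hsq y).const_smul δ)) hmax
  simp only [smul_eq_mul, hlap] at hle
  exact ⟨y, hy, by linarith⟩

lemma laplacian_limit_nonpos_of_isLocalMax {ι : Type*} {l : Filter ι} [l.NeBot] {F : ι → E → ℝ}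
    {G : E → ℝ} {x₀ : E} {L : ℝ} (hmax : IsLocalMax G x₀)
    (hF : ∀ᶠ x in 𝓝 x₀, Tendsto (fun p : ι × E => F p.1 p.2) (l ×ˢ 𝓝 x) (𝓝 (G x)))
    (hdiff : ∀ᶠ p in l ×ˢ 𝓝 x₀, ContDiffAt ℝ 2 (F p.1) p.2)
    (hlap : Tendsto (fun p : ι × E => Δ (F p.1) p.2) (l ×ˢ 𝓝 x₀) (𝓝 L)) : L ≤ 0 := by
  by_contra! hL
  obtain ⟨δ, hδ, hδL⟩ : ∃ δ > 0, 2 * δ * (finrank ℝ E : ℝ) < L := by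
    refine ⟨L / (2 * (finrank ℝ E + 1)), by positivity, ?_⟩
    field_simp
    linarith
  obtain ⟨P, hP, Q, hQ, hPQ⟩ := eventually_prod_iff.1
    (hdiff.and (hlap.eventually (lt_mem_nhds hδL)))
  obtain ⟨ρ, hρ, hball⟩ := nhds_basis_closedBall.mem_iff.1 (hQ.and (hF.and hmax))
  have hη : 0 < δ * ρ ^ 2 / 2 := by positivity
  have hsphere : ∀ᶠ t in l, ∀ x ∈ sphere x₀ ρ, F t x < G x₀ + δ * ρ ^ 2 / 2 := by
    have hprod := (isCompact_sphere x₀ ρ).mem_prod_nhdsSet_of_forall fun x hx =>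
      have ⟨_, hFx, hGx⟩ := hball (sphere_subset_closedBall hx)
      hFx.eventually (gt_mem_nhds (show G x < G x₀ + δ * ρ ^ 2 / 2 by linarith))
    exact (Eventually.curry hprod).mono fun t ht x hx => ht.self_of_nhdsSet x hx
  have hcenter : ∀ᶠ t in l, G x₀ - δ * ρ ^ 2 / 2 < F t x₀ :=
    (hF.self_of_nhds.comp (tendsto_id.prodMk tendsto_const_nhds)).eventually
      (lt_mem_nhds (by linarith))
  obtain ⟨t, htP, hts, htc⟩ := (hP.and (hsphere.and hcenter)).exists
  obtain ⟨y, hy, hle⟩ := exists_mem_ball_laplacian_le (δ := δ) hρ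
    (fun x hx => (hPQ htP (hball hx).1).1) fun x hx => by linarith [hts x hx]
  exact hle.not_gt (hPQ htP (hball (ball_subset_closedBall hy)).1).2

end LocalMax

section Kato

lemma card_mul_sq_le_of_sum_eq_zero {ι : Type*} [Fintype ι] {a : ι → ℝ} (ha : ∑ i, a i = 0)
    (k : ι) : Fintype.card ι * a k ^ 2 ≤ (Fintype.card ι - 1) * ∑ i, a i ^ 2 := by
  classical
  have hsum := Finset.add_sum_erase Finset.univ a (Finset.mem_univ k)
  have hsq := Finset.add_sum_erase Finset.univ (fun i => a i ^ 2) (Finset.mem_univ k)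
  have hcs := sq_sum_le_card_mul_sum_sq (s := Finset.univ.erase k) (f := a)
  rw [Finset.cast_card_erase_of_mem (Finset.mem_univ k), Finset.card_univ,
    eq_neg_of_add_eq_zero_right (hsum.trans ha)] at hcs
  rw [← hsq]
  linarith

variable {E : Type*} [NormedAddCommGroup E] [InnerProductSpace ℝ E] [FiniteDimensional ℝ E]

/-- The factor `(N - 1) / N`, absent from the plain operator norm bound, is the gain behind the
refined Kato inequality. -/
lemma finrank_mul_norm_sq_le_of_trace_eq_zero {T : E →ₗ[ℝ] E} (hT : T.IsSymmetric)
    (htr : LinearMap.trace ℝ E T = 0) (g : E) :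
    finrank ℝ E * ‖T g‖ ^ 2 ≤
      (finrank ℝ E - 1) * (‖g‖ ^ 2 * LinearMap.trace ℝ E (T ∘ₗ T)) := by
  let b := hT.eigenvectorBasis rfl
  let a := hT.eigenvalues rfl
  have hTb (i) : T (b i) = a i • b i := hT.apply_eigenvectorBasis rfl i
  have htrace : LinearMap.trace ℝ E (T ∘ₗ T) = ∑ i, a i ^ 2 := by
    simp [LinearMap.trace_eq_sum_inner _ b, hTb, inner_smul_right, pow_two]
  have hsum : ∑ i, a i = 0 := by
    simpa [LinearMap.trace_eq_sum_inner _ b, hTb, inner_smul_right] using htr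
  have hnorm : ‖T g‖ ^ 2 = ∑ i, a i ^ 2 * ⟪b i, g⟫ ^ 2 := by
    simp [← b.sum_sq_norm_inner_right (T g), ← hT _ g, hTb, inner_smul_left, mul_pow]
  have hg : ‖g‖ ^ 2 = ∑ i, ⟪b i, g⟫ ^ 2 := by
    simp [← b.sum_sq_norm_inner_right g]
  calc finrank ℝ E * ‖T g‖ ^ 2
      = ∑ i, (finrank ℝ E * a i ^ 2) * ⟪b i, g⟫ ^ 2 := by
        simp only [hnorm, Finset.mul_sum, mul_assoc]
    _ ≤ ∑ i, ((finrank ℝ E - 1) * ∑ j, a j ^ 2) * ⟪b i, g⟫ ^ 2 := by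
        refine Finset.sum_le_sum fun i _ => mul_le_mul_of_nonneg_right ?_ (sq_nonneg _)
        simpa using card_mul_sq_le_of_sum_eq_zero hsum i
    _ = (finrank ℝ E - 1) * (‖g‖ ^ 2 * LinearMap.trace ℝ E (T ∘ₗ T)) := by
        rw [← Finset.mul_sum, ← hg, htrace]
        ring

end Kato

section Bochner

variable {E : Type*} [NormedAddCommGroup E] [InnerProductSpace ℝ E] [FiniteDimensional ℝ E]
  {f u w : E → ℝ} {x : E}

lemma continuousAt_laplacian (hf : ContDiffAt ℝ 2 f x) : ContinuousAt (Δ f) x := by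
  have htrace : Continuous fun L : E →L[ℝ] E => LinearMap.trace ℝ E L :=
    (LinearMap.trace ℝ E ∘ₗ ContinuousLinearMap.coeLM ℝ).continuous_of_finiteDimensional
  rw [funext (laplacian_eq_trace_fderiv_gradient f)]
  exact htrace.continuousAt.comp
    ((contDiffAt_gradient (n := 1) hf).fderiv_right (m := 0) le_rfl).continuousAt

lemma laplacian_sum {ι : Type*} {s : Finset ι} {F : ι → E → ℝ}
    (hF : ∀ i ∈ s, ContDiffAt ℝ 2 (F i) x) :
    Δ (fun y => ∑ i ∈ s, F i y) x = ∑ i ∈ s, Δ (F i) x := by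
  classical
  induction s using Finset.induction_on with
  | empty => simp
  | insert i s hi ih =>
    simp only [Finset.forall_mem_insert] at hF
    simp only [Finset.sum_insert hi, ← ih hF.2]
    exact hF.1.laplacian_add (ContDiffAt.sum hF.2)

lemma laplacian_mul_sq_of_harmonicAt {g : E → ℝ} (hw : ContDiffAt ℝ 2 w x)
    (hg : HarmonicAt g x) :
    Δ (fun y => w y * g y ^ 2) x =
      Δ w x * g x ^ 2 + 4 * (g x * ⟪∇ w x, ∇ g x⟫) + 2 * w x * ‖∇ g x‖ ^ 2 := by
  have hgrad : ∇ (fun y => g y * g y) x = (2 * g x) • ∇ g x := by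
    have h := (hg.1.differentiableAt two_ne_zero).hasGradientAt
    rw [(hasGradientAt_mul h h).gradient, ← add_smul, two_mul]
  simp only [pow_two]
  rw [laplacian_mul hw (hg.1.mul hg.1), laplacian_mul hg.1 hg.1, hgrad, hg.2.self_of_nhds]
  simp only [inner_smul_right, real_inner_self_eq_norm_sq, Pi.zero_apply]
  ring

lemma tendsto_diffQuot_inner_gradient (hu : ContDiffAt ℝ 2 u x) (v : E) :
    Tendsto (fun p : ℝ × E => diffQuot u v p.1 p.2) (𝓝[≠] 0 ×ˢ 𝓝 x) (𝓝 ⟪∇ u x, v⟫) := by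
  rw [inner_gradient_left]
  exact tendsto_diffQuot (hu.hasStrictFDerivAt two_ne_zero) v

lemma eventually_harmonicAt_diffQuot (hu : HarmonicAt u x) (v : E) :
    ∀ᶠ p in 𝓝[≠] (0 : ℝ) ×ˢ 𝓝 x, HarmonicAt (diffQuot u v p.1) p.2 ∧
      ∇ (diffQuot u v p.1) p.2 = diffQuot (∇ u) v p.1 p.2 := by
  have hshift : Tendsto (fun p : ℝ × E => p.2 + p.1 • v) (𝓝[≠] 0 ×ˢ 𝓝 x) (𝓝 x) := by
    simpa using tendsto_snd.add
      ((tendsto_fst.mono_right nhdsWithin_le_nhds : Tendsto Prod.fst _ (𝓝 (0 : ℝ))).smul_const v)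
  filter_upwards [tendsto_snd.eventually hu.eventually, hshift.eventually hu.eventually]
    with p hp hpv
  exact ⟨harmonicAt_diffQuot hp hpv, gradient_diffQuot (hp.1.differentiableAt two_ne_zero)
    (hpv.1.differentiableAt two_ne_zero)⟩

lemma tendsto_laplacian_mul_diffQuot_sq (hu : HarmonicAt u x) (hw : ContDiffAt ℝ 2 w x) (v : E) :
    Tendsto (fun p : ℝ × E => Δ (fun y => w y * diffQuot u v p.1 y ^ 2) p.2) (𝓝[≠] 0 ×ˢ 𝓝 x)
      (𝓝 (Δ w x * ⟪∇ u x, v⟫ ^ 2 + 4 * (⟪∇ u x, v⟫ * ⟪∇ w x, fderiv ℝ (∇ u) x v⟫) +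
        2 * w x * ‖fderiv ℝ (∇ u) x v‖ ^ 2)) := by
  have hw₀ : Tendsto (fun p : ℝ × E => w p.2) (𝓝[≠] 0 ×ˢ 𝓝 x) (𝓝 (w x)) :=
    hw.continuousAt.tendsto.comp tendsto_snd
  have hw₁ : Tendsto (fun p : ℝ × E => ∇ w p.2) (𝓝[≠] 0 ×ˢ 𝓝 x) (𝓝 (∇ w x)) :=
    (differentiableAt_gradient hw).continuousAt.tendsto.comp tendsto_snd
  have hw₂ : Tendsto (fun p : ℝ × E => Δ w p.2) (𝓝[≠] 0 ×ˢ 𝓝 x) (𝓝 (Δ w x)) :=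
    (continuousAt_laplacian hw).tendsto.comp tendsto_snd
  have hq := tendsto_diffQuot_inner_gradient hu.1 v
  have hgq := tendsto_diffQuot ((contDiffAt_gradient (n := 1) hu.1).hasStrictFDerivAt one_ne_zero) v
  refine Tendsto.congr' ?_ (((hw₂.mul (hq.pow 2)).add ((hq.mul (hw₁.inner hgq)).const_mul 4)).add
    ((hw₀.const_mul 2).mul (hgq.norm.pow 2)))
  filter_upwards [eventually_harmonicAt_diffQuot hu v,
    tendsto_snd.eventually (hw.eventually (by simp))] with p ⟨hp, hgrad⟩ hwp
  rw [laplacian_mul_sq_of_harmonicAt hwp hp, hgrad]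

lemma bochner_nonpos_of_isLocalMax (hu : HarmonicAt u x) (hw : ContDiffAt ℝ 2 w x)
    (hmax : IsLocalMax (fun y => w y * ‖∇ u y‖ ^ 2) x) :
    Δ w x * ‖∇ u x‖ ^ 2 + 4 * ⟪∇ w x, fderiv ℝ (∇ u) x (∇ u x)⟫ +
      2 * w x * LinearMap.trace ℝ E ((fderiv ℝ (∇ u) x : E →ₗ[ℝ] E) ∘ₗ fderiv ℝ (∇ u) x) ≤ 0 := by
  let b := stdOrthonormalBasis ℝ E
  have hsym := isSymmetric_fderiv_gradient hu.1
  have hdiff : ∀ i, ∀ᶠ p in 𝓝[≠] (0 : ℝ) ×ˢ 𝓝 x,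
      ContDiffAt ℝ 2 (fun y => w y * diffQuot u (b i) p.1 y ^ 2) p.2 := fun i => by
    filter_upwards [eventually_harmonicAt_diffQuot hu (b i),
      tendsto_snd.eventually (hw.eventually (by simp))] with p hp hwp using hwp.mul (hp.1.1.pow 2)
  have hcross : ∑ i, ⟪∇ u x, b i⟫ * ⟪∇ w x, fderiv ℝ (∇ u) x (b i)⟫ =
      ⟪∇ w x, fderiv ℝ (∇ u) x (∇ u x)⟫ := by
    have hsym' (a : E) : ⟪∇ w x, fderiv ℝ (∇ u) x a⟫ = ⟪a, fderiv ℝ (∇ u) x (∇ w x)⟫ :=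
      (hsym _ _).symm.trans (real_inner_comm _ _)
    simp only [hsym', b.sum_inner_mul_inner]
  have hhess : ∑ i, ‖fderiv ℝ (∇ u) x (b i)‖ ^ 2 =
      LinearMap.trace ℝ E ((fderiv ℝ (∇ u) x : E →ₗ[ℝ] E) ∘ₗ fderiv ℝ (∇ u) x) := by
    rw [LinearMap.trace_eq_sum_inner _ b]
    refine Finset.sum_congr rfl fun i _ => ?_
    rw [← real_inner_self_eq_norm_sq]
    exact hsym (b i) _
  rw [← hcross, ← hhess, ← b.sum_sq_inner_left]
  simp only [Finset.mul_sum, ← Finset.sum_add_distrib]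
  refine laplacian_limit_nonpos_of_isLocalMax (l := 𝓝[≠] (0 : ℝ))
    (F := fun t y => ∑ i, w y * diffQuot u (b i) t y ^ 2) hmax ?_ ?_ ?_
  · filter_upwards [hu.eventually, hw.eventually (by simp)] with y hy hwy
    rw [← b.sum_sq_inner_left, Finset.mul_sum]
    exact tendsto_finsetSum _ fun i _ => (hwy.continuousAt.tendsto.comp tendsto_snd).mul
      ((tendsto_diffQuot_inner_gradient hy.1 (b i)).pow 2)
  · filter_upwards [eventually_all.2 hdiff] with p hp using ContDiffAt.sum fun i _ => hp i
  · refine Tendsto.congr' ?_ (tendsto_finsetSum _ fun i _ =>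
      tendsto_laplacian_mul_diffQuot_sq hu hw (b i))
    filter_upwards [eventually_all.2 hdiff] with p hp using (laplacian_sum fun i _ => hp i).symm

lemma gradient_add_hessian_eq_zero_of_isLocalMax (hu : ContDiffAt ℝ 2 u x)
    (hw : DifferentiableAt ℝ w x) (hmax : IsLocalMax (fun y => w y * ‖∇ u y‖ ^ 2) x) :
    ‖∇ u x‖ ^ 2 • ∇ w x + (2 * w x) • fderiv ℝ (∇ u) x (∇ u x) = 0 := by
  have hgrad := hasGradientAt_mul hw.hasGradientAt (hasGradientAt_norm_gradient_sq hu)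
  rw [← (toDual ℝ E).map_eq_zero_iff, ← hmax.hasFDerivAt_eq_zero hgrad.hasFDerivAt, smul_smul,
    mul_comm (w x), add_comm]

lemma weight_mul_laplacian_le_of_isLocalMax (hu : HarmonicAt u x) (hw : ContDiffAt ℝ 2 w x)
    (hw₀ : 0 < w x) (hgrad : ∇ u x ≠ 0) (hmax : IsLocalMax (fun y => w y * ‖∇ u y‖ ^ 2) x) :
    2 * (finrank ℝ E - 1) * (w x * Δ w x) ≤ (3 * finrank ℝ E - 4) * ‖∇ w x‖ ^ 2 := by
  have : Nontrivial E := ⟨∇ u x, 0, hgrad⟩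
  have hN : (1 : ℝ) ≤ finrank ℝ E := by exact_mod_cast finrank_pos
  have hbochner := bochner_nonpos_of_isLocalMax hu hw hmax
  have hkato := finrank_mul_norm_sq_le_of_trace_eq_zero (isSymmetric_fderiv_gradient hu.1)
    ((laplacian_eq_trace_fderiv_gradient u x).symm.trans hu.2.self_of_nhds) (∇ u x)
  obtain ⟨k, hk, hgk⟩ : ∃ k > 0, ‖∇ u x‖ ^ 2 = 2 * w x * k :=
    ⟨‖∇ u x‖ ^ 2 / (2 * w x), by positivity, by field_simp⟩
  have hH : fderiv ℝ (∇ u) x (∇ u x) = -(k • ∇ w x) := by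
    have hcrit := gradient_add_hessian_eq_zero_of_isLocalMax hu.1
      (hw.differentiableAt two_ne_zero) hmax
    rw [hgk, mul_smul, ← smul_add, add_comm] at hcrit
    exact eq_neg_of_add_eq_zero_left ((smul_eq_zero.1 hcrit).resolve_left (by positivity))
  simp only [ContinuousLinearMap.coe_coe, hH, hgk, norm_neg, norm_smul, inner_neg_right,
    inner_smul_right, real_inner_self_eq_norm_sq, mul_pow, Real.norm_eq_abs, sq_abs]
    at hkato hbochner
  refine le_of_mul_le_mul_left ?_ hk
  set tr := LinearMap.trace ℝ E _
  have hkato' : finrank ℝ E * (k * ‖∇ w x‖ ^ 2) ≤ (finrank ℝ E - 1) * (2 * w x * tr) :=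
    le_of_mul_le_mul_left (by linarith) hk
  linarith [mul_le_mul_of_nonneg_left hbochner (sub_nonneg.2 hN)]

lemma weight_rpow_laplacian_le_of_isLocalMax {β : ℝ} (hβ : 0 < β) (hu : HarmonicAt u x)
    (hf : ContDiffAt ℝ 2 f x) (hf₀ : 0 < f x) (hgrad : ∇ u x ≠ 0)
    (hmax : IsLocalMax (fun y => f y ^ β * ‖∇ u y‖ ^ 2) x) :
    2 * (finrank ℝ E - 1) * (f x * Δ f x) ≤
      (2 * (finrank ℝ E - 1) + β * (finrank ℝ E - 2)) * ‖∇ f x‖ ^ 2 := by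
  have hpow (s : ℝ) (hs : 0 < s) : HasDerivAt (· ^ β) (β * s ^ (β - 1)) s :=
    Real.hasDerivAt_rpow_const (.inl hs.ne')
  have hpow' : HasDerivAt (fun s => β * s ^ (β - 1)) (β * ((β - 1) * f x ^ (β - 1 - 1))) (f x) :=
    (Real.hasDerivAt_rpow_const (.inl hf₀.ne')).const_mul β
  have hle := weight_mul_laplacian_le_of_isLocalMax hu (hf.rpow_const_of_ne hf₀.ne')
    (Real.rpow_pos_of_pos hf₀ β) hgrad hmax
  rw [laplacian_comp ((eventually_gt_nhds hf₀).mono hpow) hpow' hf,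
    (hasGradientAt_comp (hpow _ hf₀) (hf.differentiableAt two_ne_zero).hasGradientAt).gradient,
    norm_smul, mul_pow, Real.norm_eq_abs, sq_abs] at hle
  obtain ⟨z, hz, hz₂, hz₁, hz₀⟩ : ∃ z > 0, f x ^ (β - 1 - 1) = z ∧ f x ^ (β - 1) = f x * z ∧
      f x ^ β = f x * (f x * z) := by
    refine ⟨_, Real.rpow_pos_of_pos hf₀ (β - 1 - 1), rfl, ?_, ?_⟩ <;>
      simp [mul_comm (f x), ← Real.rpow_add_one hf₀.ne']
  rw [hz₀, hz₁, hz₂] at hle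
  refine le_of_mul_le_mul_left ?_ (show 0 < β * (f x * z) ^ 2 by positivity)
  linarith

end Bochner

section Neumann

variable {E : Type*} [NormedAddCommGroup E] [InnerProductSpace ℝ E] {u w f : E → ℝ} {x p v : E}

lemma exists_hasDerivAt_norm_sub_eq (hx : x ≠ p) (hv : ⟪v, x - p⟫ = 0) :
    ∃ c : ℝ → E, c 0 = x ∧ HasDerivAt c v 0 ∧ ∀ s, ‖c s - p‖ = ‖x - p‖ := by
  have hr : ‖x - p‖ ≠ 0 := norm_ne_zero_iff.2 (sub_ne_zero.2 hx)
  set κ := ‖v‖ ^ 2 / ‖x - p‖ ^ 2 with hκ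
  refine ⟨fun s => p + (√(1 + κ * s ^ 2))⁻¹ • (x - p + s • v), by simp, ?_, fun s => ?_⟩
  · have hfactor : HasDerivAt (fun s : ℝ => (√(1 + κ * s ^ 2))⁻¹) 0 0 := by
      have h := (((hasDerivAt_pow 2 (0 : ℝ)).const_mul κ).const_add 1).sqrt (by simp)
      simpa using h.fun_inv (by simp)
    have hline : HasDerivAt (fun s : ℝ => x - p + s • v) v 0 := by
      simpa using ((hasDerivAt_id (0 : ℝ)).smul_const v).const_add (x - p)
    simpa using (hfactor.fun_smul hline).const_add p
  · have hs : 0 < 1 + κ * s ^ 2 := by positivity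
    rw [← sq_eq_sq₀ (norm_nonneg _) (norm_nonneg _), add_sub_cancel_left, norm_smul, mul_pow,
      norm_add_sq_real, inner_smul_right, real_inner_comm, hv, norm_smul, norm_inv, inv_pow,
      Real.norm_of_nonneg (Real.sqrt_nonneg _), Real.sq_sqrt hs.le, mul_pow, Real.norm_eq_abs,
      sq_abs, inv_mul_eq_iff_eq_mul₀ hs.ne', hκ]
    field_simp
    ring

lemma sub_mem_posTangentConeAt_exterior (x p : E) :
    x - p ∈ posTangentConeAt {y | ‖x - p‖ ≤ ‖y - p‖} x := by
  refine mem_posTangentConeAt_of_segment_subset fun y hy => ?_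
  obtain ⟨t, ⟨ht, -⟩, rfl⟩ := segment_eq_image' ℝ x (x + (x - p)) ▸ hy
  rw [mem_ofPred_eq, show x + t • (x + (x - p) - x) - p = (1 + t) • (x - p) by module, norm_smul,
    Real.norm_of_nonneg (by positivity)]
  nlinarith [norm_nonneg (x - p)]

variable [CompleteSpace E]

lemma inner_gradient_hessian_of_neumann (hu : ContDiffAt ℝ 2 u x) (hx : x ≠ p)
    (hN : ∀ᶠ y in 𝓝 x, ‖y - p‖ = ‖x - p‖ → ⟪∇ u y, y - p⟫ = 0) :
    ⟪∇ u x, fderiv ℝ (∇ u) x (x - p)⟫ = -‖∇ u x‖ ^ 2 := by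
  obtain ⟨c, hc₀, hcd, hcn⟩ := exists_hasDerivAt_norm_sub_eq hx (hN.self_of_nhds rfl)
  have hzero : (fun s => ⟪∇ u (c s), c s - p⟫) =ᶠ[𝓝 0] fun _ => 0 := by
    have hc : Tendsto c (𝓝 0) (𝓝 x) := hc₀ ▸ hcd.continuousAt.tendsto
    filter_upwards [hc.eventually hN] with s hs using hs (hcn s)
  have hgrad : HasDerivAt (∇ u ∘ c) (fderiv ℝ (∇ u) x (∇ u x)) 0 :=
    (differentiableAt_gradient hu).hasFDerivAt.comp_hasDerivAt_of_eq 0 hcd hc₀.symm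
  have hderiv := (hgrad.inner ℝ (hcd.sub_const p)).unique
    ((hasDerivAt_const (0 : ℝ) (0 : ℝ)).congr_of_eventuallyEq hzero)
  simp only [Function.comp_apply, hc₀, real_inner_self_eq_norm_sq] at hderiv
  have hsym := isSymmetric_fderiv_gradient hu (∇ u x) (x - p)
  simp only [ContinuousLinearMap.coe_coe] at hsym
  linarith

lemma inner_gradient_weight_le_of_neumann (hu : ContDiffAt ℝ 2 u x) (hw : DifferentiableAt ℝ w x)
    (hgrad : ∇ u x ≠ 0) (hx : x ≠ p)
    (hN : ∀ᶠ y in 𝓝 x, ‖y - p‖ = ‖x - p‖ → ⟪∇ u y, y - p⟫ = 0)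
    (hmax : IsLocalMaxOn (fun y => w y * ‖∇ u y‖ ^ 2) {y | ‖x - p‖ ≤ ‖y - p‖} x) :
    ⟪∇ w x, x - p⟫ ≤ 2 * w x := by
  have hderiv := hasGradientAt_mul hw.hasGradientAt (hasGradientAt_norm_gradient_sq hu)
  have hle := hmax.hasFDerivWithinAt_nonpos hderiv.hasFDerivAt.hasFDerivWithinAt
    (sub_mem_posTangentConeAt_exterior x p)
  have hsym := isSymmetric_fderiv_gradient hu (∇ u x) (x - p)
  simp only [ContinuousLinearMap.coe_coe] at hsym
  simp only [toDual_apply_apply, inner_add_left, real_inner_smul_left, hsym,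
    inner_gradient_hessian_of_neumann hu hx hN] at hle
  have hpos : 0 < ‖∇ u x‖ ^ 2 := by positivity
  refine le_of_mul_le_mul_left ?_ hpos
  linarith

lemma inner_gradient_rpow_le_of_neumann {β : ℝ} (hu : ContDiffAt ℝ 2 u x)
    (hf : DifferentiableAt ℝ f x) (hf₀ : 0 < f x) (hgrad : ∇ u x ≠ 0) (hx : x ≠ p)
    (hN : ∀ᶠ y in 𝓝 x, ‖y - p‖ = ‖x - p‖ → ⟪∇ u y, y - p⟫ = 0)
    (hmax : IsLocalMaxOn (fun y => f y ^ β * ‖∇ u y‖ ^ 2) {y | ‖x - p‖ ≤ ‖y - p‖} x) :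
    β * ⟪∇ f x, x - p⟫ ≤ 2 * f x := by
  have hpow : HasDerivAt (· ^ β) (β * f x ^ (β - 1)) (f x) :=
    Real.hasDerivAt_rpow_const (.inl hf₀.ne')
  have hw := hasGradientAt_comp hpow hf.hasGradientAt
  have hle := inner_gradient_weight_le_of_neumann hu hw.hasFDerivAt.differentiableAt hgrad hx hN
    hmax
  rw [hw.gradient, real_inner_smul_left, show β = β - 1 + 1 by ring,
    Real.rpow_add_one hf₀.ne'] at hle
  refine le_of_mul_le_mul_left ?_ (Real.rpow_pos_of_pos hf₀ (β - 1))
  ring_nf at hle ⊢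
  linarith

end Neumann

section MaximumPrinciple

variable {E : Type*} [NormedAddCommGroup E] {P : Set E} {c : ℝ} {x q : E}

/-- The closed ball of radius `c` about the origin with the open unit balls centred at the points
of `P` removed. The region `V` of the main theorem is the case `P = neckCenters eₙ ε`. -/
def perforatedBall (c : ℝ) (P : Set E) : Set E :=
  {x | ‖x‖ ≤ c ∧ ∀ q ∈ P, 1 ≤ ‖x - q‖}

lemma isCompact_perforatedBall [ProperSpace E] : IsCompact (perforatedBall c P) := by
  have hclosed : IsClosed {x : E | ∀ q ∈ P, 1 ≤ ‖x - q‖} := by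
    simp only [ofPred_forall]
    exact isClosed_biInter fun q _ => isClosed_le continuous_const (by fun_prop)
  refine (isCompact_closedBall 0 c).of_isClosed_subset
    ((isClosed_le continuous_norm continuous_const).inter hclosed) fun x hx => ?_
  simpa using hx.1

lemma eventually_mem_perforatedBall (hP : P.Finite) (hx : x ∈ perforatedBall c P)
    (hxc : ‖x‖ < c) :
    ∀ᶠ y in 𝓝 x, (∀ q ∈ P, ‖x - q‖ = 1 → 1 ≤ ‖y - q‖) → y ∈ perforatedBall c P := by
  have hinactive : ∀ q ∈ P, ∀ᶠ y in 𝓝 x, ‖x - q‖ ≠ 1 → 1 < ‖y - q‖ := fun q hq => by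
    by_cases h : ‖x - q‖ = 1
    · simp [h]
    · filter_upwards [(by fun_prop : Continuous fun y => ‖y - q‖).continuousAt.eventually
        (lt_mem_nhds ((hx.2 q hq).lt_of_ne' h))] with y hy _ using hy
  filter_upwards [continuous_norm.continuousAt.eventually (gt_mem_nhds hxc),
    (eventually_all_finite hP).2 hinactive] with y hyc hy hactive
  refine ⟨hyc.le, fun q hq => ?_⟩
  by_cases h : ‖x - q‖ = 1
  exacts [hactive q hq h, (hy q hq h).le]

lemma norm_sub_ne_one_of_pairwise (hP : P.Pairwise fun q q' => 2 < ‖q - q'‖) {q' : E}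
    (hq : q ∈ P) (hq' : q' ∈ P) (hne : q' ≠ q) (hx : ‖x - q‖ = 1) : ‖x - q'‖ ≠ 1 := by
  intro hx'
  have hle := norm_sub_le (x - q) (x - q')
  rw [sub_sub_sub_cancel_left, hx, hx'] at hle
  linarith [hP hq' hq hne]

variable [InnerProductSpace ℝ E] [FiniteDimensional ℝ E] {u f : E → ℝ} {β M : ℝ} {z : E}

/-- A function which is harmonic in the interior of a perforated ball, `C²` up to the boundary, and
has zero normal derivative on the unit spheres bounding the perforations. -/
structure IsNeumannHarmonicOn (u : E → ℝ) (c : ℝ) (P : Set E) : Prop where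
  contDiffAt : ∀ x ∈ perforatedBall c P, ContDiffAt ℝ 2 u x
  laplacian_eq_zero : ∀ x ∈ interior (perforatedBall c P), Δ u x = 0
  neumann : ∀ q ∈ P, ∀ x ∈ perforatedBall c P, ‖x - q‖ = 1 → ⟪∇ u x, x - q⟫ = 0

/-- A weight `f` for which `f ^ β * ‖∇ u‖ ^ 2` has no nonzero maximum in a perforated ball away
from the sphere of radius `c`: `norm_sq_gradient_lt` contradicts the second-order condition at an
interior maximum and `two_mul_lt_radial` the first-order condition at a maximum on a unit sphere. -/
structure IsGradientBarrier (β c : ℝ) (P : Set E) (f : E → ℝ) : Prop where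
  contDiff : ContDiff ℝ 2 f
  pos : ∀ x ∈ perforatedBall c P, 0 < f x
  norm_sq_gradient_lt : ∀ x ∈ perforatedBall c P,
    (2 * (finrank ℝ E - 1) + β * (finrank ℝ E - 2)) * ‖∇ f x‖ ^ 2 <
      2 * (finrank ℝ E - 1) * (f x * Δ f x)
  two_mul_lt_radial : ∀ q ∈ P, ∀ x ∈ perforatedBall c P, ‖x - q‖ = 1 →
    2 * f x < β * ⟪∇ f x, x - q⟫

namespace IsGradientBarrier

lemma gradient_eq_zero_of_isMaxOn_of_forall_ne (hf : IsGradientBarrier β c P f)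
    (hu : IsNeumannHarmonicOn u c P) (hβ : 0 < β) (hP : P.Finite) (hz : z ∈ perforatedBall c P)
    (hzc : ‖z‖ < c) (hne : ∀ q ∈ P, ‖z - q‖ ≠ 1)
    (hmax : IsMaxOn (fun y => f y ^ β * ‖∇ u y‖ ^ 2) (perforatedBall c P) z) : ∇ u z = 0 := by
  by_contra hgrad
  have hnhds : perforatedBall c P ∈ 𝓝 z :=
    (eventually_mem_perforatedBall hP hz hzc).mono fun y hy => hy fun q hq h => (hne q hq h).elim
  have hharm : HarmonicAt u z := ⟨hu.contDiffAt z hz, by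
    filter_upwards [interior_mem_nhds.2 hnhds] with y hy using hu.laplacian_eq_zero y hy⟩
  exact (weight_rpow_laplacian_le_of_isLocalMax hβ hharm hf.contDiff.contDiffAt (hf.pos z hz) hgrad
    (hmax.isLocalMax hnhds)).not_gt (hf.norm_sq_gradient_lt z hz)

lemma gradient_eq_zero_of_isMaxOn_of_norm_sub_eq_one (hf : IsGradientBarrier β c P f)
    (hu : IsNeumannHarmonicOn u c P) (hP : P.Finite) (hsep : P.Pairwise fun q q' => 2 < ‖q - q'‖)
    (hz : z ∈ perforatedBall c P) (hzc : ‖z‖ < c) (hq : q ∈ P) (hzq : ‖z - q‖ = 1)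
    (hmax : IsMaxOn (fun y => f y ^ β * ‖∇ u y‖ ^ 2) (perforatedBall c P) z) : ∇ u z = 0 := by
  by_contra hgrad
  have hnhds : ∀ᶠ y in 𝓝 z, 1 ≤ ‖y - q‖ → y ∈ perforatedBall c P := by
    filter_upwards [eventually_mem_perforatedBall hP hz hzc] with y hy hyq
    refine hy fun q' hq' hzq' => ?_
    obtain rfl : q' = q :=
      by_contra fun hne => norm_sub_ne_one_of_pairwise hsep hq hq' hne hzq hzq'
    exact hyq
  have hzne : z ≠ q := fun h => by simp [h] at hzq
  refine (inner_gradient_rpow_le_of_neumann (hu.contDiffAt z hz)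
    (hf.contDiff.differentiable (by simp) z) (hf.pos z hz) hgrad hzne ?_ ?_).not_gt
    (hf.two_mul_lt_radial q hq z hz hzq)
  · filter_upwards [hnhds] with y hy hyq
    rw [hzq] at hyq
    exact hu.neumann q hq y (hy hyq.ge) hyq
  · rw [hzq]
    filter_upwards [nhdsWithin_le_nhds hnhds, self_mem_nhdsWithin] with y hy hyq
    exact hmax (hy hyq)

theorem rpow_mul_norm_sq_gradient_le (hf : IsGradientBarrier β c P f)
    (hu : IsNeumannHarmonicOn u c P) (hβ : 0 < β) (hP : P.Finite)
    (hsep : P.Pairwise fun q q' => 2 < ‖q - q'‖) (hM : ∀ x ∈ perforatedBall c P, f x ≤ M)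
    (hx : x ∈ perforatedBall c P) :
    f x ^ β * ‖∇ u x‖ ^ 2 ≤
      M ^ β * sSup ((fun y => ‖∇ u y‖ ^ 2) '' {y ∈ perforatedBall c P | ‖y‖ = c}) := by
  have hgrad : ContinuousOn (fun y => ‖∇ u y‖ ^ 2) (perforatedBall c P) := fun y hy =>
    ((differentiableAt_gradient (hu.contDiffAt y hy)).continuousAt.norm.pow 2).continuousWithinAt
  have hweight : ContinuousOn (fun y => f y ^ β) (perforatedBall c P) :=
    hf.contDiff.continuous.continuousOn.rpow_const fun y hy => .inl (hf.pos y hy).ne'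
  obtain ⟨z, hz, hmax⟩ := isCompact_perforatedBall.exists_isMaxOn ⟨x, hx⟩ (hweight.mul hgrad)
  refine (hmax hx).trans ?_
  have hsup : 0 ≤ sSup ((fun y => ‖∇ u y‖ ^ 2) '' {y ∈ perforatedBall c P | ‖y‖ = c}) :=
    Real.sSup_nonneg (forall_mem_image.2 fun y _ => by positivity)
  have hM₀ : 0 < M := (hf.pos z hz).trans_le (hM z hz)
  rcases hz.1.eq_or_lt with hzc | hzc
  · have hle : ‖∇ u z‖ ^ 2 ≤ sSup ((fun y => ‖∇ u y‖ ^ 2) '' {y ∈ perforatedBall c P | ‖y‖ = c}) :=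
      le_csSup ((isCompact_perforatedBall.bddAbove_image hgrad).mono (image_mono fun y hy => hy.1))
        ⟨z, ⟨hz, hzc⟩, rfl⟩
    exact mul_le_mul (Real.rpow_le_rpow (hf.pos z hz).le (hM z hz) hβ.le) hle (by positivity)
      (by positivity)
  · have hz₀ : ∇ u z = 0 := by
      by_cases h : ∃ q ∈ P, ‖z - q‖ = 1
      · obtain ⟨q, hq, hzq⟩ := h
        exact hf.gradient_eq_zero_of_isMaxOn_of_norm_sub_eq_one hu hP hsep hz hzc hq hzq hmax
      · push Not at h
        exact hf.gradient_eq_zero_of_isMaxOn_of_forall_ne hu hβ hP hz hzc h hmax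
    simpa [hz₀] using mul_nonneg (by positivity) hsup

end IsGradientBarrier

end MaximumPrinciple

section Barrier

variable {E : Type*} [NormedAddCommGroup E] [InnerProductSpace ℝ E] {e x : E}
  {A c δ ε κ : ℝ}

/-- The quantity `|x'|²` of the paper, for the splitting of `x` along the unit vector `e` and the
orthogonal hyperplane. -/
def transverseSq (e x : E) : ℝ :=
  ‖x‖ ^ 2 - ⟪e, x⟫ ^ 2

/-- The quadratic weight `δ + |x'|² - A xₙ²` whose power multiplies `‖∇ u‖ ^ 2` in the maximum
principle. -/
def barrier (e : E) (δ A : ℝ) (x : E) : ℝ :=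
  δ + transverseSq e x - A * ⟪e, x⟫ ^ 2

/-- The centres of the two unit balls at distance `2 * ε` from each other along `e`. -/
def neckCenters (e : E) (ε : ℝ) : Set E :=
  {(1 + ε) • e, -((1 + ε) • e)}

lemma transverseSq_nonneg (he : ‖e‖ = 1) (x : E) : 0 ≤ transverseSq e x := by
  have h := abs_real_inner_le_norm e x
  rw [he, one_mul] at h
  exact sub_nonneg.2 (sq_le_sq' (neg_le_of_abs_le h) (le_of_abs_le h))

lemma barrier_eq (e : E) (δ A : ℝ) :
    barrier e δ A = fun x => δ + (‖x - 0‖ ^ 2 - (1 + A) * ⟪e, x⟫ ^ 2) := by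
  ext x
  simp only [barrier, transverseSq, sub_zero]
  ring

lemma contDiff_barrier : ContDiff ℝ 2 (barrier e δ A) := by
  have hnorm : ContDiff ℝ 2 fun x : E => ‖x‖ ^ 2 := contDiff_norm_sq ℝ
  have hinner : ContDiff ℝ 2 fun x : E => ⟪e, x⟫ := contDiff_const.inner ℝ contDiff_id
  unfold barrier transverseSq
  fun_prop

lemma barrier_le_add_one (hA : 0 ≤ A) (hx : ‖x‖ ≤ 1) :
    barrier e δ A x ≤ δ + 1 := by
  have hsq : ‖x‖ ^ 2 ≤ 1 := pow_le_one₀ (norm_nonneg x) hx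
  have hA' : 0 ≤ (1 + A) * ⟪e, x⟫ ^ 2 := by positivity
  simp only [barrier_eq, sub_zero]
  linarith

lemma hasGradientAt_barrier [CompleteSpace E] (x : E) :
    HasGradientAt (barrier e δ A) ((2 : ℝ) • x - (2 * (1 + A) * ⟪e, x⟫) • e) x := by
  have hsub := ((hasGradientAt_norm_sub_sq 0 x).hasFDerivAt.sub
    ((hasGradientAt_inner_sq e x).hasFDerivAt.const_mul (1 + A))).const_add δ
  rw [barrier_eq, hasGradientAt_iff_hasFDerivAt]
  refine hsub.congr_fderiv ?_
  ext v
  simp only [sub_zero, map_smul, sub_apply, smul_apply, toDual_apply_apply, smul_eq_mul, map_sub]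
  ring

lemma norm_sq_gradient_barrier [CompleteSpace E] (he : ‖e‖ = 1) (x : E) :
    ‖∇ (barrier e δ A) x‖ ^ 2 = 4 * (transverseSq e x + A ^ 2 * ⟪e, x⟫ ^ 2) := by
  rw [(hasGradientAt_barrier x).gradient, norm_sub_sq_real, real_inner_smul_left,
    real_inner_smul_right, norm_smul, norm_smul, he, real_inner_comm e x, transverseSq,
    mul_pow, mul_one, Real.norm_eq_abs, Real.norm_eq_abs, sq_abs, sq_abs]
  ring

lemma laplacian_barrier [FiniteDimensional ℝ E] (he : ‖e‖ = 1) (x : E) :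
    Δ (barrier e δ A) x = 2 * (finrank ℝ E - 1 - A) := by
  rw [laplacian_eq_trace_of_hasFDerivAt (.of_forall hasGradientAt_barrier)
    (((hasFDerivAt_id x).const_smul (2 : ℝ)).sub
      (((innerSL ℝ e).hasFDerivAt.const_mul (2 * (1 + A))).smul_const e))]
  simp only [ContinuousLinearMap.toLinearMap_sub, ContinuousLinearMap.toLinearMap_smul,
    ContinuousLinearMap.coe_id, map_sub, map_smul, LinearMap.trace_id, smul_eq_mul,
    trace_smulRight, smul_apply, innerSL_apply_apply, real_inner_self_eq_norm_sq, he]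
  ring

lemma norm_sub_smul_sq (he : ‖e‖ = 1) (σ : ℝ) (x : E) :
    ‖x - σ • e‖ ^ 2 = transverseSq e x + ⟪e, x⟫ ^ 2 - 2 * σ * ⟪e, x⟫ + σ ^ 2 := by
  rw [norm_sub_sq_real, real_inner_smul_right, norm_smul, he, real_inner_comm e x, mul_one,
    Real.norm_eq_abs, sq_abs, transverseSq]
  ring

lemma inner_gradient_barrier_of_norm_sub_eq_one [CompleteSpace E] (he : ‖e‖ = 1) {σ : ℝ}
    (hx : ‖x - σ • e‖ = 1) :
    ⟪∇ (barrier e δ A) x, x - σ • e⟫ =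
      (2 + A) * transverseSq e x + A * (σ ^ 2 - 1) - A * ⟪e, x⟫ ^ 2 := by
  have hsphere := norm_sub_smul_sq he σ x
  rw [hx, transverseSq] at hsphere
  rw [(hasGradientAt_barrier x).gradient]
  simp only [inner_sub_left, inner_sub_right, real_inner_smul_left, real_inner_smul_right,
    real_inner_self_eq_norm_sq, he, real_inner_comm e x, transverseSq]
  linear_combination A * hsphere

lemma perforatedBall_neckCenters (c : ℝ) (e : E) (ε : ℝ) :
    perforatedBall c (neckCenters e ε) =
      {x | ‖x‖ ≤ c ∧ 1 ≤ ‖x - (1 + ε) • e‖ ∧ 1 ≤ ‖x + (1 + ε) • e‖} := by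
  ext x
  simp [perforatedBall, neckCenters]

lemma finite_neckCenters (e : E) (ε : ℝ) : (neckCenters e ε).Finite :=
  toFinite {(1 + ε) • e, -((1 + ε) • e)}

lemma pairwise_neckCenters (he : ‖e‖ = 1) (hε : 0 < ε) :
    (neckCenters e ε).Pairwise fun q q' => 2 < ‖q - q'‖ := by
  have hdist : 2 < ‖(1 + ε) • e - -((1 + ε) • e)‖ := by
    rw [sub_neg_eq_add, ← two_smul ℝ, norm_smul, norm_smul, he, Real.norm_of_nonneg (by positivity),
      Real.norm_of_nonneg (by positivity)]
    linarith
  have : Std.Symm fun q q' : E => 2 < ‖q - q'‖ := ⟨fun q q' h => by rwa [norm_sub_rev]⟩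
  exact pairwise_pair_of_symm.2 fun _ => hdist

lemma exists_eq_smul_of_mem_neckCenters {q : E} (hq : q ∈ neckCenters e ε) :
    ∃ σ : ℝ, σ ^ 2 = (1 + ε) ^ 2 ∧ q = σ • e := by
  rcases hq with rfl | rfl
  exacts [⟨1 + ε, rfl, rfl⟩, ⟨-(1 + ε), by ring, (neg_smul _ _).symm⟩]

lemma two_mul_abs_inner_le_of_mem_neck (he : ‖e‖ = 1)
    (hx : x ∈ perforatedBall c (neckCenters e ε)) :
    2 * (1 + ε) * |⟪e, x⟫| ≤ transverseSq e x + ⟪e, x⟫ ^ 2 + 2 * ε + ε ^ 2 := by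
  have hsphere (σ : ℝ) (hσ : σ ^ 2 = (1 + ε) ^ 2) (hle : 1 ≤ ‖x - σ • e‖) :
      2 * σ * ⟪e, x⟫ ≤ transverseSq e x + ⟪e, x⟫ ^ 2 + 2 * ε + ε ^ 2 := by
    have h := one_le_pow₀ hle (n := 2)
    rw [norm_sub_smul_sq he, hσ] at h
    linarith
  have hneg : 1 ≤ ‖x - -(1 + ε) • e‖ := by
    rw [neg_smul]
    exact hx.2 _ (.inr rfl)
  have hpos := hsphere (1 + ε) rfl (hx.2 _ (.inl rfl))
  have hneg := hsphere (-(1 + ε)) (by ring) hneg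
  rcases abs_cases ⟪e, x⟫ with ⟨h, -⟩ | ⟨h, -⟩ <;> rw [h] <;> linarith

lemma sq_inner_le_of_mem_neck (he : ‖e‖ = 1) (hc : c < 1 / 2) (hε : 0 < ε) (hε₁ : ε < 1)
    (hx : x ∈ perforatedBall c (neckCenters e ε)) :
    ⟪e, x⟫ ^ 2 ≤ 2 * c * (ε + transverseSq e x) := by
  have hz : |⟪e, x⟫| ≤ c := by simpa [he] using (abs_real_inner_le_norm e x).trans (by
    rw [he, one_mul]; exact hx.1)
  have hz₀ := abs_nonneg ⟪e, x⟫
  have hlin : |⟪e, x⟫| ≤ 2 * (ε + transverseSq e x) := by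
    have h := two_mul_abs_inner_le_of_mem_neck he hx
    rw [← sq_abs] at h
    nlinarith [transverseSq_nonneg he x]
  calc ⟪e, x⟫ ^ 2 = |⟪e, x⟫| * |⟪e, x⟫| := by rw [← sq_abs, sq]
    _ ≤ c * (2 * (ε + transverseSq e x)) := by gcongr; exact hz₀.trans hz
    _ = 2 * c * (ε + transverseSq e x) := by ring

lemma two_mul_barrier_lt_radial [CompleteSpace E] {β : ℝ} (he : ‖e‖ = 1) (hA : 0 ≤ A)
    (hβ₀ : 0 ≤ β) (hβ₂ : β ≤ 2) (hAβ : 2 ≤ β * (2 + A)) (hκ : κ < A * β) (hε : 0 < ε) {q : E}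
    (hq : q ∈ neckCenters e ε) (hx : ‖x - q‖ = 1) :
    2 * barrier e (κ * ε) A x < β * ⟪∇ (barrier e (κ * ε) A) x, x - q⟫ := by
  obtain ⟨σ, hσ, rfl⟩ := exists_eq_smul_of_mem_neckCenters hq
  rw [inner_gradient_barrier_of_norm_sub_eq_one he hx, hσ, barrier]
  have hT : 0 ≤ (β * (2 + A) - 2) * transverseSq e x :=
    mul_nonneg (sub_nonneg.2 hAβ) (transverseSq_nonneg he x)
  have hgap : 0 < (A * β - κ) * ε := mul_pos (sub_pos.2 hκ) hε
  have hε' : 0 ≤ β * A * ε ^ 2 := by positivity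
  have hz : 0 ≤ (2 - β) * A * ⟪e, x⟫ ^ 2 :=
    mul_nonneg (mul_nonneg (sub_nonneg.2 hβ₂) hA) (sq_nonneg _)
  linarith

/-- In a small neck `z = xₙ²` is a small multiple of `ε + |x'|²`, so the terms with `z` are
absorbed. -/
lemma exists_neck_radius {K L : ℝ} (hA : 0 ≤ A) (hκ : 0 < κ) (hK : 0 < K) (hKL : K < L) :
    ∃ c μ : ℝ, 0 < c ∧ c < 1 / 2 ∧ 0 < μ ∧ ∀ ε R z : ℝ, 0 < ε → 0 ≤ R → z ≤ 2 * c * (ε + R) →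
      μ * (ε + R) ≤ κ * ε + R - A * z ∧ K * (R + A ^ 2 * z) < L * (κ * ε + R - A * z) := by
  have hL : 0 < L := hK.trans hKL
  set a := min κ 1
  set b := min (L * κ) (L - K)
  set B := L * A + K * A ^ 2 with hB
  have ha : 0 < a := lt_min hκ one_pos
  have hb : 0 < b := lt_min (mul_pos hL hκ) (sub_pos.2 hKL)
  have hsmall (r : ℝ) {s : ℝ} (hs : 0 < s) : ∀ᶠ c in 𝓝[>] (0 : ℝ), r * (2 * c) < s :=
    nhdsWithin_le_nhds ((by fun_prop : Continuous fun c : ℝ => r * (2 * c)).continuousAt.eventually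
      (gt_mem_nhds (by simpa using hs)))
  obtain ⟨c, hcA, hcB, hc₁, hc⟩ := ((hsmall A ha).and ((hsmall B hb).and
    ((hsmall 1 one_pos).and self_mem_nhdsWithin))).exists
  refine ⟨c, a - A * (2 * c), hc, by linarith, sub_pos.2 hcA, fun ε R z hε hR hz => ?_⟩
  have haR : a * ε + a * R ≤ κ * ε + 1 * R := by
    gcongr
    exacts [min_le_left _ _, min_le_right _ _]
  have hbR : b * ε + b * R ≤ L * κ * ε + (L - K) * R := by
    gcongr
    exacts [min_le_left _ _, min_le_right _ _]
  have hAz : A * z ≤ A * (2 * c * (ε + R)) := by gcongr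
  have hBz : B * z ≤ B * (2 * c * (ε + R)) := by gcongr
  have hBb : B * (2 * c) * (ε + R) < b * (ε + R) := by gcongr
  constructor
  · linarith
  · rw [hB] at hBz hBb
    linarith

end Barrier

section Exponent

lemma gammaStar_quadratic_neg {n : ℕ} (hn : 4 ≤ n) {γ : ℝ} (hγ₀ : 0 < γ) (hγ : γ < gammaStar n) :
    ((n : ℝ) - 2) * γ ^ 2 + ((n : ℝ) ^ 2 - 4 * n + 5) * γ - ((n : ℝ) ^ 2 - 5 * n + 5) < 0 := by
  have hn' : (4 : ℝ) ≤ n := by exact_mod_cast hn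
  set b := (n : ℝ) ^ 2 - 4 * n + 5 with hb
  have hb₀ : 0 < b := by nlinarith
  rw [gammaStar, lt_div_iff₀ (by linarith), ← hb, lt_neg_add_iff_add_lt, Real.lt_sqrt] at hγ
  · nlinarith
  · nlinarith

lemma lt_one_of_lt_gammaStar {n : ℕ} (hn : 4 ≤ n) {γ : ℝ} (hγ₀ : 0 < γ) (hγ : γ < gammaStar n) :
    γ < 1 := by
  have hneg := gammaStar_quadratic_neg hn hγ₀ hγ
  have hn' : (4 : ℝ) ≤ n := by exact_mod_cast hn
  by_contra! hγ₁
  have hb : 0 < (n : ℝ) ^ 2 - 4 * n + 5 := by nlinarith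
  nlinarith [mul_le_mul_of_nonneg_left hγ₁ hb.le, one_le_pow₀ hγ₁ (n := 2)]

/-- The first bound on `A` is needed on the unit spheres, the second at interior points. They leave
room for `A` exactly when the quadratic defining `gammaStar n` is negative at `γ`. -/
lemma exists_barrier_coefficient {n : ℕ} (hn : 4 ≤ n) {γ : ℝ} (hγ₀ : 0 < γ)
    (hγ : γ < gammaStar n) :
    ∃ A : ℝ, 0 < A ∧ 2 < (1 - γ) * (2 + A) ∧
      2 * ((n : ℝ) - 1) + (1 - γ) * (n - 2) < (n - 1) * (n - 1 - A) := by
  have hneg := gammaStar_quadratic_neg hn hγ₀ hγ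
  have hβ : 0 < 1 - γ := sub_pos.2 (lt_one_of_lt_gammaStar hn hγ₀ hγ)
  have hn₁ : (0 : ℝ) < n - 1 := by
    have : (4 : ℝ) ≤ n := by exact_mod_cast hn
    linarith
  have hroom : 2 / (1 - γ) - 2 < (n - 1) - (2 * (n - 1) + (1 - γ) * (n - 2)) / (n - 1) := by
    have hdiff : (n - 1) - (2 * (n - 1) + (1 - γ) * (n - 2)) / (n - 1) - (2 / (1 - γ) - 2) =
        -(((n : ℝ) - 2) * γ ^ 2 + ((n : ℝ) ^ 2 - 4 * n + 5) * γ - ((n : ℝ) ^ 2 - 5 * n + 5)) /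
          ((1 - γ) * (n - 1)) := by
      field_simp
      ring
    rw [← sub_pos, hdiff]
    exact div_pos (neg_pos.2 hneg) (mul_pos hβ hn₁)
  obtain ⟨A, hA₁, hA₂⟩ := exists_between hroom
  refine ⟨A, lt_trans ?_ hA₁, ?_, ?_⟩
  · rw [sub_pos, lt_div_iff₀ hβ]
    linarith
  · rw [sub_lt_iff_lt_add', div_lt_iff₀' hβ] at hA₁
    exact hA₁
  · rw [lt_sub_comm, div_lt_iff₀' hn₁] at hA₂
    exact hA₂

end Exponent

section Neck

variable {E : Type*} [NormedAddCommGroup E] [InnerProductSpace ℝ E] [FiniteDimensional ℝ E]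
  {e : E} {A β c ε κ : ℝ}

lemma isGradientBarrier_barrier (he : ‖e‖ = 1) (hA : 0 ≤ A) (hβ₀ : 0 ≤ β) (hβ₂ : β ≤ 2)
    (hAβ : 2 ≤ β * (2 + A)) (hκ : κ < A * β) (hε : 0 < ε)
    (hpos : ∀ x ∈ perforatedBall c (neckCenters e ε), 0 < barrier e (κ * ε) A x)
    (hlt : ∀ x ∈ perforatedBall c (neckCenters e ε),
      (2 * (finrank ℝ E - 1) + β * (finrank ℝ E - 2)) *
          (transverseSq e x + A ^ 2 * ⟪e, x⟫ ^ 2) <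
        (finrank ℝ E - 1) * (finrank ℝ E - 1 - A) * barrier e (κ * ε) A x) :
    IsGradientBarrier β c (neckCenters e ε) (barrier e (κ * ε) A) where
  contDiff := contDiff_barrier
  pos := hpos
  norm_sq_gradient_lt x hx := by
    rw [norm_sq_gradient_barrier he, laplacian_barrier he]
    linarith [hlt x hx]
  two_mul_lt_radial _ hq _ _ hxq := two_mul_barrier_lt_radial he hA hβ₀ hβ₂ hAβ hκ hε hq hxq

theorem exists_isGradientBarrier_barrier (he : ‖e‖ = 1) (hE : 4 ≤ finrank ℝ E) {γ : ℝ}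
    (hγ₀ : 0 < γ) (hγ : γ < gammaStar (finrank ℝ E)) :
    ∃ A κ c μ : ℝ, 0 ≤ A ∧ 0 < κ ∧ 0 < c ∧ c < 1 / 2 ∧ 0 < μ ∧ ∀ ε, 0 < ε → ε < 1 →
      IsGradientBarrier (1 - γ) c (neckCenters e ε) (barrier e (κ * ε) A) ∧
      ∀ x ∈ perforatedBall c (neckCenters e ε),
        μ * (ε + transverseSq e x) ≤ barrier e (κ * ε) A x := by
  have hβ : 0 < 1 - γ := sub_pos.2 (lt_one_of_lt_gammaStar hE hγ₀ hγ)
  obtain ⟨A, hA, hAβ, hKL⟩ := exists_barrier_coefficient hE hγ₀ hγ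
  have hE' : (4 : ℝ) ≤ finrank ℝ E := by exact_mod_cast hE
  have hK : 0 < 2 * ((finrank ℝ E : ℝ) - 1) + (1 - γ) * (finrank ℝ E - 2) :=
    add_pos (by linarith) (mul_pos hβ (by linarith))
  have hκ : 0 < A * (1 - γ) / 2 := by positivity
  obtain ⟨c, μ, hc₀, hc, hμ, hbound⟩ := exists_neck_radius hA.le hκ hK hKL
  refine ⟨A, A * (1 - γ) / 2, c, μ, hA.le, hκ, hc₀, hc, hμ, fun ε hε hε₁ => ?_⟩
  have hneck (x) (hx : x ∈ perforatedBall c (neckCenters e ε)) := hbound ε _ _ hε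
    (transverseSq_nonneg he x) (sq_inner_le_of_mem_neck he hc hε hε₁ hx)
  refine ⟨isGradientBarrier_barrier he hA.le hβ.le (by linarith) hAβ.le (by linarith) hε
    (fun x hx => ?_) fun x hx => (hneck x hx).2, fun x hx => (hneck x hx).1⟩
  exact (mul_pos hμ (add_pos_of_pos_of_nonneg hε (transverseSq_nonneg he x))).trans_le
    (hneck x hx).1

theorem exists_transverseSq_rpow_mul_norm_sq_gradient_le (he : ‖e‖ = 1) (hE : 4 ≤ finrank ℝ E)
    {γ : ℝ} (hγ₀ : 0 < γ) (hγ : γ < gammaStar (finrank ℝ E)) :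
    ∃ c ε₀ C : ℝ, 0 < c ∧ c < 1 / 2 ∧ 0 < ε₀ ∧ ε₀ < 1 ∧ 0 < C ∧
      ∀ ε, 0 < ε → ε < ε₀ → ∀ u : E → ℝ, IsNeumannHarmonicOn u c (neckCenters e ε) →
      ∀ x ∈ perforatedBall c (neckCenters e ε),
        (ε + transverseSq e x) ^ (1 - γ) * ‖∇ u x‖ ^ 2 ≤
          C * sSup ((fun y => ‖∇ u y‖ ^ 2) ''
            {y ∈ perforatedBall c (neckCenters e ε) | ‖y‖ = c}) := by
  have hβ : 0 < 1 - γ := sub_pos.2 (lt_one_of_lt_gammaStar hE hγ₀ hγ)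
  obtain ⟨A, κ, c, μ, hA, hκ, hc₀, hc, hμ, hbarrier⟩ :=
    exists_isGradientBarrier_barrier he hE hγ₀ hγ
  refine ⟨c, 1 / 2, ((κ + 1) / μ) ^ (1 - γ), hc₀, hc, by norm_num, by norm_num, by positivity,
    fun ε hε hε₁ u hu x hx => ?_⟩
  obtain ⟨hf, hlower⟩ := hbarrier ε hε (by linarith)
  have hupper (y) (hy : y ∈ perforatedBall c (neckCenters e ε)) :
      barrier e (κ * ε) A y ≤ κ + 1 :=
    (barrier_le_add_one hA (by linarith [hy.1])).trans
      (by linarith [mul_le_of_le_one_right hκ.le (by linarith : ε ≤ 1)])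
  have hρ : 0 ≤ ε + transverseSq e x := add_nonneg hε.le (transverseSq_nonneg he x)
  rw [Real.div_rpow (by positivity) hμ.le, div_mul_eq_mul_div, le_div_iff₀' (by positivity)]
  calc μ ^ (1 - γ) * ((ε + transverseSq e x) ^ (1 - γ) * ‖∇ u x‖ ^ 2)
      = (μ * (ε + transverseSq e x)) ^ (1 - γ) * ‖∇ u x‖ ^ 2 := by
        rw [Real.mul_rpow hμ.le hρ, mul_assoc]
    _ ≤ barrier e (κ * ε) A x ^ (1 - γ) * ‖∇ u x‖ ^ 2 := by
        gcongr
        exact hlower x hx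
    _ ≤ _ := hf.rpow_mul_norm_sq_gradient_le hu hβ (finite_neckCenters e ε)
        (pairwise_neckCenters he hε) hupper hx

end Neck

section EuclideanSpace

lemma laplacian_eq_sum_fderiv_fderiv_single {n : ℕ} {u : EuclideanSpace ℝ (Fin n) → ℝ}
    {x : EuclideanSpace ℝ (Fin n)} (hu : ContDiffAt ℝ 2 u x) :
    Δ u x = ∑ i, fderiv ℝ (fun y => fderiv ℝ u y (EuclideanSpace.single i 1)) x
      (EuclideanSpace.single i 1) := by
  have hu' : DifferentiableAt ℝ (fderiv ℝ u) x :=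
    (hu.fderiv_right (m := 1) le_rfl).differentiableAt one_ne_zero
  rw [laplacian_eq_iteratedFDeriv_orthonormalBasis u (EuclideanSpace.basisFun (Fin n) ℝ)]
  simp [iteratedFDeriv_two_apply, fderiv_clm_apply hu' (differentiableAt_const _)]

lemma sum_erase_sq_eq_transverseSq {n : ℕ} (m : Fin n) (x : EuclideanSpace ℝ (Fin n)) :
    ∑ i ∈ Finset.univ.erase m, x i ^ 2 = transverseSq (EuclideanSpace.single m 1) x := by
  rw [transverseSq, EuclideanSpace.inner_single_left, EuclideanSpace.real_norm_sq_eq,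
    ← Finset.sum_erase_add _ _ (Finset.mem_univ m)]
  simp

end EuclideanSpace

/-- The maximum-principle form of the main gradient estimate (Theorem 1.1): for `n ≥ 4` and
`0 < γ < γ*(n)` there are constants `c ∈ (0,1/2)`, `ε₀ ∈ (0,1)`, `C > 0`, depending only on
`n` and `γ`, such that for every `ε ∈ (0,ε₀)` and every `u` which is `C²` on an open set
containing the narrow region `V = {‖x‖ ≤ c} \ (int B⁺ ∪ int B⁻)`, harmonic in the interior
of `V`, and satisfying the homogeneous Neumann conditions on `∂B⁺ ∩ V` and `∂B⁻ ∩ V`, one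
has `(ε + |x'|²)^{1−γ} ‖∇u(x)‖² ≤ C · sup{‖∇u(y)‖² : y ∈ V, ‖y‖ = c}` for all `x ∈ V`. -/
theorem main_gradient_estimate (n : ℕ) (hn : 4 ≤ n) (γ : ℝ) (hγ0 : 0 < γ)
    (hγ : γ < gammaStar n) :
    ∃ c ε₀ C : ℝ, 0 < c ∧ c < 1 / 2 ∧ 0 < ε₀ ∧ ε₀ < 1 ∧ 0 < C ∧
      ∀ ε : ℝ, 0 < ε → ε < ε₀ →
      ∀ u : EuclideanSpace ℝ (Fin n) → ℝ,
      ∀ V : Set (EuclideanSpace ℝ (Fin n)),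
      V = {x | ‖x‖ ≤ c ∧
            1 ≤ ‖x - (1 + ε) • EuclideanSpace.single (⟨n - 1, by omega⟩ : Fin n) (1 : ℝ)‖ ∧
            1 ≤ ‖x + (1 + ε) • EuclideanSpace.single (⟨n - 1, by omega⟩ : Fin n) (1 : ℝ)‖} →
      (∃ U : Set (EuclideanSpace ℝ (Fin n)), IsOpen U ∧ V ⊆ U ∧ ContDiffOn ℝ 2 u U) →
      (∀ x ∈ interior V,
        ∑ i : Fin n, fderiv ℝ (fun y => fderiv ℝ u y (EuclideanSpace.single i (1 : ℝ))) x
          (EuclideanSpace.single i (1 : ℝ)) = 0) →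
      (∀ x ∈ V, ‖x - (1 + ε) • EuclideanSpace.single (⟨n - 1, by omega⟩ : Fin n) (1 : ℝ)‖ = 1 →
        ⟪gradient u x,
          x - (1 + ε) • EuclideanSpace.single (⟨n - 1, by omega⟩ : Fin n) (1 : ℝ)⟫ = 0) →
      (∀ x ∈ V, ‖x + (1 + ε) • EuclideanSpace.single (⟨n - 1, by omega⟩ : Fin n) (1 : ℝ)‖ = 1 →
        ⟪gradient u x,
          x + (1 + ε) • EuclideanSpace.single (⟨n - 1, by omega⟩ : Fin n) (1 : ℝ)⟫ = 0) →
      ∀ x ∈ V,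
        (ε + ∑ i ∈ Finset.univ.erase (⟨n - 1, by omega⟩ : Fin n), (x i) ^ 2) ^ (1 - γ) *
            ‖gradient u x‖ ^ 2 ≤
          C * sSup ((fun y => ‖gradient u y‖ ^ 2) '' {y ∈ V | ‖y‖ = c}) := by
  obtain ⟨c, ε₀, C, hc₀, hc, hε₀, hε₁, hC, hbound⟩ :=
    exists_transverseSq_rpow_mul_norm_sq_gradient_le
      (e := EuclideanSpace.single (⟨n - 1, by omega⟩ : Fin n) (1 : ℝ)) (by simp) (by simpa) hγ0
      (by simpa)
  refine ⟨c, ε₀, C, hc₀, hc, hε₀, hε₁, hC, fun ε hε hεε₀ u V hV hU hΔ hN₁ hN₂ x hx => ?_⟩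
  rw [← perforatedBall_neckCenters] at hV
  subst hV
  obtain ⟨U, hU, hVU, hu⟩ := hU
  have hcont y hy := hu.contDiffAt (hU.mem_nhds (@hVU y hy))
  rw [sum_erase_sq_eq_transverseSq]
  refine hbound ε hε hεε₀ u ⟨hcont, fun y hy => ?_, ?_⟩ x hx
  · rw [laplacian_eq_sum_fderiv_fderiv_single (hcont y (interior_subset hy)), hΔ y hy]
  · rintro q (rfl | rfl)
    · exact hN₁
    · simpa only [sub_neg_eq_add] using hN₂
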